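/- (Nitecki) Let k_1, …, k_m be positive integers and let n ≥ 2 be an integer. Let Σ := { ∑_{i=1}^m ε_i k_i : ε_i ∈ {0,1} } be the set of subset sums of {k_1,…,k_m}. Assume |Σ| = n and that the residues modulo n of the elements of Σ form the full set {0, 1, …, n−1}. Enumerate Σ = {σ_0 < σ_1 < ⋯ < σ_{n−1}} (so σ_0 = 0). Let a be the multigeometric sequence (k_1,…,k_m; 1/n). Then: (i) if σ_i = i·σ_1 for all i ∈ {0,…,n−1}, then the achievement set E(a) is the compact interval [0, ∑ₙ a(n)]; (ii) otherwise, E(a) is a Cantorval. -/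

import Mathlib

/-!
The achievement set `E` is the set of sums `∑_{j ≥ 1} s_j n⁻ʲ` with digits `s_j ∈ Σ`. It is a compact
subset of `[0, M]` containing `0`, symmetric under `x ↦ M - x`, and it satisfies `n E = Σ + E`. The
structure `IsDigitTile` records these facts, and only they are used afterwards.

If `Σ = {0, d, …, (n - 1) d}`, every point of `[0, d]` has an expansion with digits in `Σ`, and
`M = d` (`IsDigitTile.eq_Icc`).

In general `E + ℤ = ℝ`, because `Σ` is a complete residue system; by Baire's theorem `E` contains
an interval. Let `(p, q)` be a gap of `E`. For large `J`, the point `q` has an expansion of length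
`J`, and just to the right of `q` the set `E` is a copy of `E` near `0` scaled by `n⁻ᴶ`
(`IsDigitTile.gap_right_endpoint`). So intervals accumulate at `q`, and gaps do as soon as `E`
contains no interval `(0, ε)`. The symmetry handles the endpoint `p`.

It remains to show that `(0, ε) ⊆ E` forces `Σ` to be an arithmetic progression
(`IsDigitTile.exists_notMem_near_zero`). Let `Z` be the set of integers `∑_{i < J} s_i nⁱ`. Comparing
measures in `nᴶ E = ⋃ (z + E)` shows that the translates `z + E`, `z ∈ Z`, are disjoint up to null
sets, and `(0, ε) ⊆ E` implies that they cover `[0, ∞)`. Since `E` starts with an interval, `Z` is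
then determined by a recurrence of finite memory, hence is eventually periodic. Combined with the
equivalence `z + nᴶ t ∈ Z ↔ t ∈ Z` for expansions `z` of length `J`, this makes `Z` periodic and
then invariant under translation by its own elements. So `Z = d ℕ`, and `Σ = {0, d, …, (n - 1) d}`.
-/

open Set Filter Topology MeasureTheory
open scoped Pointwise

/-- The achievement set (set of subsums) of the series `∑_{n ≥ 1} x n`
(sequences are indexed by `n ≥ 1`; the value `x 0` is irrelevant). -/
def achievementSet (x : ℕ → ℝ) : Set ℝ :=
  {y : ℝ | ∃ A : Set ℕ, A ⊆ {n | 1 ≤ n} ∧ HasSum (fun n : A => x (n : ℕ)) y}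

/-- The `n`-th remainder `r n = ∑_{i > n} x i` of a series. -/
noncomputable def remainder (x : ℕ → ℝ) (n : ℕ) : ℝ :=
  ∑' i : {i : ℕ // n < i}, x (i : ℕ)

/-- The set of Kakeya conditions `K(x) = {n ≥ 1 : x n > r n}`. -/
def kakeyaSet (x : ℕ → ℝ) : Set ℕ :=
  {n : ℕ | 1 ≤ n ∧ remainder x n < x n}

/-- A Cantor set: a set homeomorphic to the Cantor ternary set. -/
def IsCantorSet (A : Set ℝ) : Prop :=
  Nonempty (A ≃ₜ cantorSet)

/-- A multi-interval set: the union of finitely many (at least one)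
nondegenerate compact intervals. -/
def IsMultiInterval (A : Set ℝ) : Prop :=
  ∃ S : Finset (ℝ × ℝ), S.Nonempty ∧ (∀ p ∈ S, p.1 < p.2) ∧
    A = ⋃ p ∈ S, Set.Icc p.1 p.2

/-- The gaps of a set `A ⊆ ℝ`: the bounded connected components of its complement. -/
def gaps (A : Set ℝ) : Set (Set ℝ) :=
  {G | (∃ x ∉ A, G = connectedComponentIn Aᶜ x) ∧ Bornology.IsBounded G}

/-- The nondegenerate connected components of a set `A ⊆ ℝ`. -/
def intervalComponents (A : Set ℝ) : Set (Set ℝ) :=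
  {I | (∃ x ∈ A, I = connectedComponentIn A x) ∧ ¬ I.Subsingleton}

/-- A Cantorval: a nonempty compact subset of `ℝ` possessing at least one gap and at
least one nondegenerate component, such that both endpoints of every gap are
accumulation points both of other gaps and of nondegenerate components. -/
def IsCantorval (A : Set ℝ) : Prop :=
  A.Nonempty ∧ IsCompact A ∧ (gaps A).Nonempty ∧ (intervalComponents A).Nonempty ∧
    ∀ G ∈ gaps A, ∀ p ∈ ({sInf G, sSup G} : Set ℝ),
      (∀ ε > (0 : ℝ), ∃ G' ∈ gaps A, G' ≠ G ∧ (G' ∩ Metric.ball p ε).Nonempty) ∧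
      (∀ ε > (0 : ℝ), ∃ I ∈ intervalComponents A, (I ∩ (Metric.ball p ε \ {p})).Nonempty)

/-! ### Digit tiles and finite expansions -/

/-- `E ⊆ [0, M]` is a compact set with `n E = S + E`, where `S` is a complete residue system
modulo `n` containing `0`; thus `E` consists of the sums `∑_{j ≥ 1} s_j n⁻ʲ` with digits `s_j ∈ S`.
The set is moreover required to contain `0` and to be symmetric under `x ↦ M - x`. -/
structure IsDigitTile (n : ℕ) (S : Finset ℕ) (E : Set ℝ) (M : ℝ) : Prop where
  two_le : 2 ≤ n
  zero_mem : 0 ∈ S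
  card_eq : S.card = n
  inj : ∀ s ∈ S, ∀ t ∈ S, s % n = t % n → s = t
  surj : ∀ r < n, ∃ s ∈ S, s % n = r
  compact : IsCompact E
  nonneg : ∀ x ∈ E, 0 ≤ x
  le_top : ∀ x ∈ E, x ≤ M
  symm : ∀ x ∈ E, M - x ∈ E
  zero : 0 ∈ E
  self : ∀ x, x ∈ E ↔ ∃ s ∈ S, (n : ℝ) * x - s ∈ E

/-- The integers `∑_{i < J} s_i nⁱ` with digits `s_i ∈ S`. -/
def expansions (n : ℕ) (S : Finset ℕ) : ℕ → Finset ℕ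
  | 0 => {0}
  | J + 1 => (S ×ˢ expansions n S J).image fun p => p.1 + n * p.2

/-- The integers admitting some finite base-`n` expansion with digits in `S`. -/
def finExp (n : ℕ) (S : Finset ℕ) : Set ℕ := {z | ∃ J, z ∈ expansions n S J}

theorem mem_expansions_succ {n : ℕ} {S : Finset ℕ} {J z : ℕ} :
    z ∈ expansions n S (J + 1) ↔ ∃ s ∈ S, ∃ w ∈ expansions n S J, s + n * w = z := by
  simp [expansions, and_assoc]

theorem card_expansions_le (n : ℕ) (S : Finset ℕ) (J : ℕ) :
    (expansions n S J).card ≤ S.card ^ J := by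
  induction J with
  | zero => simp [expansions]
  | succ J ih =>
    calc _ ≤ (S ×ˢ expansions n S J).card := Finset.card_image_le
      _ = S.card * (expansions n S J).card := Finset.card_product _ _
      _ ≤ S.card * S.card ^ J := Nat.mul_le_mul_left _ ih
      _ = _ := by ring

namespace IsDigitTile

variable {n : ℕ} {S : Finset ℕ} {E : Set ℝ} {M : ℝ}

theorem npos (h : IsDigitTile n S E M) : (0 : ℝ) < n := by
  have := h.two_le
  exact_mod_cast (by omega : 0 < n)

theorem powpos (h : IsDigitTile n S E M) (J : ℕ) : (0 : ℝ) < (n : ℝ) ^ J :=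
  pow_pos h.npos J

theorem exists_pow_gt (h : IsDigitTile n S E M) (x : ℝ) : ∃ J : ℕ, x < (n : ℝ) ^ J :=
  pow_unbounded_of_one_lt x (by exact_mod_cast h.two_le)

theorem zero_mem_expansions (h : IsDigitTile n S E M) (J : ℕ) : 0 ∈ expansions n S J := by
  induction J with
  | zero => simp [expansions]
  | succ J ih => exact mem_expansions_succ.2 ⟨0, h.zero_mem, 0, ih, by simp⟩

theorem expansions_succ_subset (h : IsDigitTile n S E M) (J : ℕ) :
    expansions n S J ⊆ expansions n S (J + 1) := by
  induction J with
  | zero =>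
    intro z hz
    have : z = 0 := by simpa [expansions] using hz
    subst this
    exact h.zero_mem_expansions 1
  | succ J ih =>
    intro z hz
    obtain ⟨s, hs, w, hw, rfl⟩ := mem_expansions_succ.1 hz
    exact mem_expansions_succ.2 ⟨s, hs, w, ih hw, rfl⟩

theorem expansions_mono (h : IsDigitTile n S E M) {i j : ℕ} (hij : i ≤ j) :
    expansions n S i ⊆ expansions n S j :=
  monotone_nat_of_le_succ (f := expansions n S) h.expansions_succ_subset hij

/-- The `J`-fold iterate of `n E = S + E`. -/
theorem mem_iff_expansion (h : IsDigitTile n S E M) (J : ℕ) (x : ℝ) :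
    x ∈ E ↔ ∃ z ∈ expansions n S J, (n : ℝ) ^ J * x - z ∈ E := by
  induction J generalizing x with
  | zero => simp [expansions]
  | succ J ih =>
    rw [ih]
    constructor
    · rintro ⟨w, hw, hx⟩
      obtain ⟨s, hs, hx⟩ := (h.self _).1 hx
      refine ⟨s + n * w, mem_expansions_succ.2 ⟨s, hs, w, hw, rfl⟩, ?_⟩
      convert hx using 1
      push_cast
      ring
    · rintro ⟨z, hz, hx⟩
      obtain ⟨s, hs, w, hw, rfl⟩ := mem_expansions_succ.1 hz
      refine ⟨w, hw, (h.self _).2 ⟨s, hs, ?_⟩⟩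
      convert hx using 1
      push_cast
      ring

theorem expansion_add_mem (h : IsDigitTile n S E M) {J z : ℕ} (hz : z ∈ expansions n S J)
    {x : ℝ} (hx : x ∈ E) : (z + x) / (n : ℝ) ^ J ∈ E := by
  refine (h.mem_iff_expansion J _).2 ⟨z, hz, ?_⟩
  have := (h.powpos J).ne'
  convert hx using 1
  field_simp
  ring

theorem expansion_mem (h : IsDigitTile n S E M) {J z : ℕ} (hz : z ∈ expansions n S J) :
    (z : ℝ) / (n : ℝ) ^ J ∈ E := by
  simpa using h.expansion_add_mem hz h.zero

theorem mem_of_approx (h : IsDigitTile n S E M) (x C : ℝ)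
    (hx : ∀ J : ℕ, ∃ z ∈ expansions n S J, |(n : ℝ) ^ J * x - z| ≤ C) : x ∈ E := by
  rw [← h.compact.isClosed.closure_eq, Metric.mem_closure_iff]
  intro ε hε
  obtain ⟨J, hJ⟩ := h.exists_pow_gt (C / ε)
  obtain ⟨z, hz, hC⟩ := hx J
  refine ⟨_, h.expansion_mem hz, ?_⟩
  have hp := h.powpos J
  rw [Real.dist_eq]
  have : x - z / (n : ℝ) ^ J = ((n : ℝ) ^ J * x - z) / (n : ℝ) ^ J := by field_simp
  rw [this, abs_div, abs_of_pos hp, div_lt_iff₀ hp]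
  rw [div_lt_iff₀ hε] at hJ
  nlinarith

/-- The expansions of length `J` represent all residues modulo `n ^ J`. -/
theorem exists_expansion_dvd (h : IsDigitTile n S E M) (J : ℕ) (N : ℤ) :
    ∃ z ∈ expansions n S J, ((n : ℤ) ^ J) ∣ N - z := by
  induction J generalizing N with
  | zero => exact ⟨0, by simp [expansions], by simp⟩
  | succ J ih =>
    have hn := h.two_le
    have hn0 : (n : ℤ) ≠ 0 := by omega
    have h1 : 0 ≤ N % n := Int.emod_nonneg _ hn0
    have h2 : N % n < n := Int.emod_lt_of_pos _ (by omega)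
    obtain ⟨s, hs, hsr⟩ := h.surj (N % n).toNat (by omega)
    have hd : (n : ℤ) ∣ N - s := by
      apply Int.dvd_of_emod_eq_zero
      apply Int.emod_eq_emod_iff_emod_sub_eq_zero.1
      have : ((s % n : ℕ) : ℤ) = N % n := by rw [hsr]; omega
      rw [← this]; push_cast; rfl
    obtain ⟨N', hN'⟩ := hd
    obtain ⟨w, hw, c, hc⟩ := ih N'
    refine ⟨s + n * w, mem_expansions_succ.2 ⟨s, hs, w, hw, rfl⟩, c, ?_⟩
    push_cast
    rw [pow_succ]
    linear_combination hN' + (n : ℤ) * hc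

/-! ### Nonempty interior -/

/-- `E + ℤ = ℝ`: this set is closed, and it contains all `N / n ^ J` because the expansions of
length `J` represent every residue modulo `n ^ J`. -/
theorem integer_translates_cover (h : IsDigitTile n S E M) (x : ℝ) :
    ∃ t : ℤ, x - t ∈ E := by
  have hcl : IsClosed (E + range ((↑) : ℤ → ℝ)) :=
    Int.isClosedEmbedding_coe_real.isClosed_range.add_left_of_isCompact h.compact
  have hx : x ∈ E + range ((↑) : ℤ → ℝ) := by
    rw [← hcl.closure_eq, Metric.mem_closure_iff]
    intro ε hε
    obtain ⟨J, hJ⟩ := h.exists_pow_gt (1 / ε)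
    obtain ⟨z, hz, t, ht⟩ := h.exists_expansion_dvd J ⌊(n : ℝ) ^ J * x⌋
    refine ⟨_, Set.add_mem_add (h.expansion_mem hz) ⟨t, rfl⟩, ?_⟩
    have hp := h.powpos J
    have ht' : ((⌊(n : ℝ) ^ J * x⌋ : ℤ) : ℝ) - z = (n : ℝ) ^ J * t := by exact_mod_cast ht
    have h1 := Int.floor_le ((n : ℝ) ^ J * x)
    have h2 := Int.lt_floor_add_one ((n : ℝ) ^ J * x)
    rw [Real.dist_eq]
    have : x - (z / (n : ℝ) ^ J + t) = ((n : ℝ) ^ J * x - ⌊(n : ℝ) ^ J * x⌋) / (n : ℝ) ^ J := by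
      rw [eq_div_iff hp.ne', sub_mul, add_mul, div_mul_cancel₀ _ hp.ne']
      linarith
    rw [this, abs_div, abs_of_pos hp, div_lt_iff₀ hp, abs_of_nonneg (by linarith)]
    rw [div_lt_iff₀ hε] at hJ
    nlinarith
  obtain ⟨e, he, _, ⟨t, rfl⟩, rfl⟩ := hx
  exact ⟨t, by simpa using he⟩

/-- Baire's theorem applied to the covering of `ℝ` by the integer translates of `E`. -/
theorem exists_Ioo_subset (h : IsDigitTile n S E M) : ∃ u v : ℝ, u < v ∧ Ioo u v ⊆ E := by
  have hU : ⋃ t : ℤ, (fun x : ℝ => x - t) ⁻¹' E = univ := by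
    ext x
    simpa using h.integer_translates_cover x
  obtain ⟨t, y, hy⟩ := nonempty_interior_of_iUnion_of_closed
    (fun t : ℤ => h.compact.isClosed.preimage (by fun_prop : Continuous fun x : ℝ => x - t)) hU
  obtain ⟨δ, hδ, hb⟩ := Metric.isOpen_iff.1 isOpen_interior y hy
  refine ⟨y - t - δ, y - t + δ, by linarith, fun x hx => ?_⟩
  have : x + t ∈ (fun x : ℝ => x - t) ⁻¹' E := by
    apply interior_subset
    apply hb
    rw [Real.ball_eq_Ioo]
    constructor <;> linarith [hx.1, hx.2]
  simpa using this

theorem M_nonneg (h : IsDigitTile n S E M) : 0 ≤ M := h.le_top 0 h.zero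

/-! ### Self-similarity of the set of finite expansions -/

theorem add_mul_mem_finExp (h : IsDigitTile n S E M) {s : ℕ} (hs : s ∈ S) (t : ℕ) :
    s + n * t ∈ finExp n S ↔ t ∈ finExp n S := by
  constructor
  · rintro ⟨J, hJ⟩
    obtain ⟨s', hs', w, hw, heq⟩ := mem_expansions_succ.1 (h.expansions_succ_subset J hJ)
    have hss : s' = s := h.inj _ hs' _ hs (by
      have := congrArg (· % n) heq
      simpa using this)
    subst hss
    have hn := h.two_le
    have : w = t := Nat.eq_of_mul_eq_mul_left (by omega : 0 < n) (by omega)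
    exact ⟨J, this ▸ hw⟩
  · rintro ⟨J, hJ⟩
    exact ⟨J + 1, mem_expansions_succ.2 ⟨s, hs, t, hJ, rfl⟩⟩

theorem add_pow_mul_mem_finExp (h : IsDigitTile n S E M) {J z : ℕ}
    (hz : z ∈ expansions n S J) (t : ℕ) :
    z + n ^ J * t ∈ finExp n S ↔ t ∈ finExp n S := by
  induction J generalizing z with
  | zero =>
    have : z = 0 := by simpa [expansions] using hz
    simp [this]
  | succ J ih =>
    obtain ⟨s, hs, w, hw, rfl⟩ := mem_expansions_succ.1 hz
    rw [← ih hw, ← h.add_mul_mem_finExp hs (w + n ^ J * t)]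
    ring_nf

theorem pow_mul_mem_finExp (h : IsDigitTile n S E M) (J t : ℕ) :
    n ^ J * t ∈ finExp n S ↔ t ∈ finExp n S := by
  simpa using h.add_pow_mul_mem_finExp (h.zero_mem_expansions J) t

/-! ### Translates of the tile are disjoint up to null sets -/

/-- The set `n ^ J • E` has measure `n ^ J * volume E` and is covered by at most `n ^ J` translates
of `E`, so no two of these translates can overlap in positive measure. -/
theorem measure_inter_eq_zero (h : IsDigitTile n S E M) {J z w : ℕ}
    (hz : z ∈ expansions n S J) (hw : w ∈ expansions n S J) (hzw : z ≠ w) :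
    volume ((fun x : ℝ => x - z) ⁻¹' E ∩ (fun x : ℝ => x - w) ⁻¹' E) = 0 := by
  set T : ℕ → Set ℝ := fun z => (fun x : ℝ => x - z) ⁻¹' E with hT
  have hvol (z : ℕ) : volume (T z) = volume E := by
    simp [hT, sub_eq_add_neg]
  have hfinE : volume E ≠ ⊤ := h.compact.measure_lt_top.ne
  have hfin (z : ℕ) : volume (T z) ≠ ⊤ := by rw [hvol]; exact hfinE
  have hmeas (z : ℕ) : MeasurableSet (T z) :=
    h.compact.isClosed.measurableSet.preimage (by fun_prop)
  have hreal (z : ℕ) : volume.real (T z) = volume.real E := by simp [Measure.real, hvol]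
  set R := ((expansions n S J).erase z).erase w with hR
  have hcover : (((n : ℝ) ^ J)⁻¹ * ·) ⁻¹' E ⊆ (⋃ s ∈ R, T s) ∪ (T z ∪ T w) := by
    intro x hx
    obtain ⟨s, hs, hx⟩ := (h.mem_iff_expansion J _).1 hx
    rw [mul_inv_cancel_left₀ (h.powpos J).ne'] at hx
    by_cases h1 : s = z
    · subst h1; exact Or.inr (Or.inl hx)
    by_cases h2 : s = w
    · subst h2; exact Or.inr (Or.inr hx)
    refine Or.inl (mem_biUnion (x := s) ?_ hx)
    simp [hR, h1, h2, hs]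
  have hscale : volume.real ((((n : ℝ) ^ J)⁻¹ * ·) ⁻¹' E) = (n : ℝ) ^ J * volume.real E := by
    rw [Measure.real, Real.volume_preimage_mul_left (inv_pos.2 (h.powpos J)).ne', inv_inv,
      abs_of_pos (h.powpos J), ENNReal.toReal_mul, ENNReal.toReal_ofReal (h.powpos J).le]
    rfl
  have hRfin : volume (⋃ s ∈ R, T s) ≠ ⊤ :=
    ((measure_biUnion_finset_le R T).trans_lt
      (ENNReal.sum_lt_top.2 fun s _ => (hfin s).lt_top)).ne
  have hUfin : volume (T z ∪ T w) ≠ ⊤ :=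
    ((measure_union_le _ _).trans_lt (ENNReal.add_lt_top.2 ⟨(hfin z).lt_top, (hfin w).lt_top⟩)).ne
  have h1 : (n : ℝ) ^ J * volume.real E ≤ volume.real (⋃ s ∈ R, T s) + volume.real (T z ∪ T w) := by
    rw [← hscale]
    refine (measureReal_mono hcover ?_).trans (measureReal_union_le _ _)
    exact ((measure_union_le _ _).trans_lt
      (ENNReal.add_lt_top.2 ⟨hRfin.lt_top, hUfin.lt_top⟩)).ne
  have h2 : volume.real (⋃ s ∈ R, T s) ≤ R.card * volume.real E := by
    refine (measureReal_biUnion_finset_le R T).trans ?_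
    simp [hreal]
  have h3 := measureReal_union_add_inter (μ := volume) (s := T z) (hmeas w) (hfin z) (hfin w)
  rw [hreal, hreal] at h3
  have hcard : (R.card : ℝ) + 2 ≤ (n : ℝ) ^ J := by
    have hc := card_expansions_le n S J
    rw [h.card_eq] at hc
    have e1 := Finset.card_erase_add_one hz
    have e2 := Finset.card_erase_add_one (s := (expansions n S J).erase z) (a := w)
      (Finset.mem_erase.2 ⟨hzw.symm, hw⟩)
    have : R.card + 2 ≤ n ^ J := by rw [hR]; omega
    exact_mod_cast this
  have hV : 0 ≤ volume.real E := measureReal_nonneg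
  have h4 : volume.real (T z ∩ T w) ≤ 0 := by nlinarith
  have h5 : volume.real (T z ∩ T w) = 0 := le_antisymm h4 measureReal_nonneg
  exact (measureReal_eq_zero_iff
    ((measure_mono inter_subset_left).trans_lt (hfin z).lt_top).ne).1 h5

end IsDigitTile

/-! ### If `E` contains an interval at `0`, the digits form an arithmetic progression -/

/-- A set of naturals determined by a recurrence of finite memory is eventually periodic, since
two of its windows of length `L` agree. -/
theorem eventually_periodic_of_recurrence (Z : Set ℕ) (D : ℕ → Prop) (L : ℕ)
    (hL : ∀ i, D i → i ≤ L)
    (hrec : ∀ u, u ∈ Z ↔ ∀ i, 1 ≤ i → i ≤ u → D i → u - i ∉ Z) :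
    ∃ N > 0, ∃ t₀, ∀ t ≥ t₀, t ∈ Z ↔ t + N ∈ Z := by
  have key : ∀ u v : ℕ, u < v → (∀ i < L, u + i ∈ Z ↔ v + i ∈ Z) →
      ∃ N > 0, ∃ t₀, ∀ t ≥ t₀, t ∈ Z ↔ t + N ∈ Z := by
    intro u v huv hst
    refine ⟨v - u, by omega, u, fun t => ?_⟩
    induction t using Nat.strong_induction_on with
    | _ t ih =>
      intro ht
      by_cases hlt : t < u + L
      · have := hst (t - u) (by omega)
        rwa [show u + (t - u) = t by omega, show v + (t - u) = t + (v - u) by omega] at this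
      · rw [hrec t, hrec (t + (v - u))]
        refine forall_congr' fun i => forall_congr' fun hi => ?_
        constructor
        · intro H _ hD hmem
          have hiL := hL i hD
          refine H (by omega) hD ((ih (t - i) (by omega) (by omega)).2 ?_)
          rwa [show t - i + (v - u) = t + (v - u) - i by omega]
        · intro H _ hD hmem
          have hiL := hL i hD
          refine H (by omega) hD ?_
          have := (ih (t - i) (by omega) (by omega)).1 hmem
          rwa [show t - i + (v - u) = t + (v - u) - i by omega] at this
  obtain ⟨u, v, huv, heq⟩ := Finite.exists_ne_map_eq_of_infinite
    (fun u : ℕ => {i : Fin L | u + (i : ℕ) ∈ Z})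
  have hst : ∀ i < L, u + i ∈ Z ↔ v + i ∈ Z := by
    intro i hi
    have := congrArg (fun A : Set (Fin L) => (⟨i, hi⟩ : Fin L) ∈ A) heq
    simpa using this
  rcases lt_or_gt_of_ne huv with h | h
  · exact key u v h hst
  · exact key v u h fun i hi => (hst i hi).symm

namespace IsDigitTile

variable {n : ℕ} {S : Finset ℕ} {E : Set ℝ} {M : ℝ}

/-- If `(0, ε) ⊆ E`, then `[0, ∞)` is tiled by the translates `z + E`, `z ∈ finExp n S`, so `u`
belongs to `finExp n S` exactly when the translates by smaller elements leave `(u, u + ε)`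
uncovered (up to a null set). -/
theorem finExp_recurrence (h : IsDigitTile n S E M) {ε : ℝ} (hε : 0 < ε) (hε1 : ε ≤ 1)
    (hE : Ioo 0 ε ⊆ E) (u : ℕ) :
    u ∈ finExp n S ↔ ∀ i, 1 ≤ i → i ≤ u →
      volume ((fun x : ℝ => x + i) ⁻¹' E ∩ Ioo 0 ε) ≠ 0 → u - i ∉ finExp n S := by
  constructor
  · rintro ⟨J, hJ⟩ i hi hiu hvol ⟨J', hJ'⟩
    apply hvol
    have h0 := h.measure_inter_eq_zero (h.expansions_mono (le_max_left J J') hJ)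
      (h.expansions_mono (le_max_right J J') hJ') (by omega)
    rw [← measure_preimage_add_right volume (u : ℝ)] at h0
    refine measure_mono_null (fun x hx => ?_) h0
    refine ⟨?_, ?_⟩
    · simpa using hE hx.2
    · have h1 : x + i ∈ E := hx.1
      simp only [mem_preimage]
      rw [Nat.cast_sub hiu]
      convert h1 using 1
      ring
  · intro H
    by_contra hu
    have hcov : Ioo 0 ε ⊆ ⋃ i ∈ {i : ℕ | 1 ≤ i ∧ i ≤ u ∧ u - i ∈ finExp n S},
        ((fun x : ℝ => x + i) ⁻¹' E ∩ Ioo 0 ε) := by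
      intro x hx
      obtain ⟨J, hJ⟩ := h.exists_pow_gt ((u + x) / ε)
      have hp := h.powpos J
      have hmem : (u + x) / (n : ℝ) ^ J ∈ E := by
        apply hE
        have hux : 0 < u + x := add_pos_of_nonneg_of_pos (Nat.cast_nonneg u) hx.1
        refine ⟨by positivity, ?_⟩
        rw [div_lt_iff₀ hε] at hJ
        rw [div_lt_iff₀ hp]
        linarith
      obtain ⟨z, hz, he⟩ := (h.mem_iff_expansion J _).1 hmem
      rw [mul_div_cancel₀ _ hp.ne'] at he
      have hzu : z < u + 1 := by
        have := h.nonneg _ he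
        have h2 := hx.2
        have : (z : ℝ) < u + 1 := by linarith
        exact_mod_cast this
      have hne : z ≠ u := fun hzu => hu ⟨J, hzu ▸ hz⟩
      refine mem_biUnion (x := u - z) ⟨by omega, by omega, J, ?_⟩ ⟨?_, hx⟩
      · rwa [show u - (u - z) = z by omega]
      · simp only [mem_preimage]
        rw [Nat.cast_sub (by omega)]
        convert he using 1
        ring
    have hnull : volume (Ioo (0 : ℝ) ε) = 0 := by
      refine measure_mono_null hcov ((measure_biUnion_null_iff (to_countable _)).2 ?_)
      rintro i ⟨hi, hiu, hz⟩
      by_contra hvol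
      exact H i hi hiu hvol hz
    rw [Real.volume_Ioo] at hnull
    simp at hnull
    linarith

theorem finExp_eventually_periodic (h : IsDigitTile n S E M) {ε : ℝ} (hε : 0 < ε)
    (hE : Ioo 0 ε ⊆ E) :
    ∃ N > 0, ∃ t₀, ∀ t ≥ t₀, t ∈ finExp n S ↔ t + N ∈ finExp n S := by
  have hrec := h.finExp_recurrence (lt_min hε one_pos) (min_le_right ε 1)
    ((Ioo_subset_Ioo_right (min_le_left ε 1)).trans hE)
  refine eventually_periodic_of_recurrence _ _ ⌈M⌉₊ ?_ hrec
  intro i hi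
  -- The recurrence has finite memory: `x + i ∈ E ⊆ [0, M]` with `x > 0` forces `i < M`.
  obtain ⟨x, hx⟩ := nonempty_of_measure_ne_zero hi
  have h1 := h.le_top _ hx.1
  have h2 := hx.2.1
  have : (i : ℝ) ≤ ⌈M⌉₊ := (by linarith : (i : ℝ) ≤ M).trans (Nat.le_ceil M)
  exact_mod_cast this

theorem exists_pos_digit (h : IsDigitTile n S E M) : ∃ s ∈ S, 0 < s := by
  obtain ⟨s, hs, h1⟩ := h.surj 1 h.two_le
  refine ⟨s, hs, Nat.pos_of_ne_zero ?_⟩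
  rintro rfl
  simp at h1

theorem pow_mul_digit_mem (h : IsDigitTile n S E M) {s : ℕ} (hs : s ∈ S) (J : ℕ) :
    n ^ J * s ∈ expansions n S (J + 1) := by
  induction J with
  | zero => exact mem_expansions_succ.2 ⟨s, hs, 0, by simp [expansions], by simp⟩
  | succ J ih => exact mem_expansions_succ.2 ⟨0, h.zero_mem, _, ih, by ring⟩

/-- Self-similarity turns eventual periodicity into periodicity: `t` lies in `finExp n S` iff
`w + n ^ J * t` does, and `w ∈ expansions n S J` can be chosen beyond the preperiod. -/
theorem finExp_periodic (h : IsDigitTile n S E M)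
    (hper : ∃ N > 0, ∃ t₀, ∀ t ≥ t₀, t ∈ finExp n S ↔ t + N ∈ finExp n S) :
    ∃ N > 0, ∀ t, t ∈ finExp n S ↔ t + N ∈ finExp n S := by
  obtain ⟨N, hN, t₀, hper⟩ := hper
  refine ⟨N, hN, fun t => ?_⟩
  have hmul : ∀ c t, t₀ ≤ t → (t ∈ finExp n S ↔ t + c * N ∈ finExp n S) := by
    intro c
    induction c with
    | zero => simp
    | succ c ih =>
      intro t ht
      rw [ih t ht, hper _ (by omega)]
      ring_nf
  obtain ⟨s, hs, hs0⟩ := h.exists_pos_digit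
  have hw := h.pow_mul_digit_mem hs t₀
  have hge : t₀ ≤ n ^ t₀ * s :=
    (Nat.lt_pow_self h.two_le).le.trans (Nat.le_mul_of_pos_right _ hs0)
  rw [← h.add_pow_mul_mem_finExp hw t, ← h.add_pow_mul_mem_finExp hw (t + N),
    hmul (n ^ (t₀ + 1)) _ (by omega)]
  ring_nf

/-- A periodic `finExp n S` is invariant under translation by each of its elements `z`.
With period `N`, choose `n ^ i ≡ n ^ (i + J)` modulo `N` and `J` so large that
`z ∈ expansions n S J`; then `t + z ∈ finExp n S` iff `n ^ i * (t + z) ∈ finExp n S` iff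
`n ^ i * (z + n ^ J * t) ∈ finExp n S` iff `t ∈ finExp n S`. -/
theorem finExp_translate (h : IsDigitTile n S E M)
    (hper : ∃ N > 0, ∀ t, t ∈ finExp n S ↔ t + N ∈ finExp n S)
    {z : ℕ} (hz : z ∈ finExp n S) (t : ℕ) : t ∈ finExp n S ↔ t + z ∈ finExp n S := by
  obtain ⟨N, hN, hper⟩ := hper
  have hmul : ∀ c t, t ∈ finExp n S ↔ t + c * N ∈ finExp n S := by
    intro c
    induction c with
    | zero => simp
    | succ c ih =>
      intro t
      rw [ih t, hper]
      ring_nf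
  have hmod : ∀ x y, x ≡ y [MOD N] → (x ∈ finExp n S ↔ y ∈ finExp n S) := by
    intro x y hxy
    rw [← Nat.mod_add_div x N, ← Nat.mod_add_div y N, mul_comm N, mul_comm N, ← hmul, ← hmul, hxy]
  obtain ⟨J, hJ⟩ := hz
  have key : ∀ i j : ℕ, i < j → n ^ (i * (J + 1)) ≡ n ^ (j * (J + 1)) [MOD N] →
      (t ∈ finExp n S ↔ t + z ∈ finExp n S) := by
    intro i j hij hcong
    have hJ' : z ∈ expansions n S ((j - i) * (J + 1)) :=
      h.expansions_mono (by nlinarith [Nat.sub_pos_of_lt hij]) hJ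
    have hpow : n ^ (j * (J + 1)) = n ^ (i * (J + 1)) * n ^ ((j - i) * (J + 1)) := by
      rw [← pow_add, ← add_mul, Nat.add_sub_cancel' hij.le]
    rw [← h.add_pow_mul_mem_finExp hJ' t, ← h.pow_mul_mem_finExp (i * (J + 1)),
      ← h.pow_mul_mem_finExp (i * (J + 1)) (t + z)]
    apply hmod
    rw [mul_add _ z, mul_add _ t, ← mul_assoc, ← hpow, add_comm]
    exact (hcong.symm.mul_right t).add_right _
  have : NeZero N := ⟨hN.ne'⟩
  obtain ⟨i, j, hij, heq⟩ := Finite.exists_ne_map_eq_of_infinite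
    (fun i : ℕ => ((n ^ (i * (J + 1)) : ℕ) : ZMod N))
  have hcong : n ^ (i * (J + 1)) ≡ n ^ (j * (J + 1)) [MOD N] :=
    (ZMod.natCast_eq_natCast_iff _ _ _).1 heq
  rcases lt_or_gt_of_ne hij with hlt | hlt
  · exact key i j hlt hcong
  · exact key j i hlt hcong.symm

/-- Translation invariance gives `finExp n S = d ℕ` with `d` its least positive element. For
`i < n` the number `i * d = s + n * w`, with `w ∈ d ℕ`, is less than `n * d`, whence `w = 0` and
`i * d = s ∈ S`. -/
theorem exists_progression (h : IsDigitTile n S E M)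
    (htr : ∀ z ∈ finExp n S, ∀ t, t ∈ finExp n S ↔ t + z ∈ finExp n S) :
    ∃ d : ℕ, S = (Finset.range n).image (fun i => i * d) := by
  classical
  have hS : ∀ s ∈ S, s ∈ finExp n S := fun s hs => ⟨1, by simpa using h.pow_mul_digit_mem hs 0⟩
  have hex : ∃ d, 0 < d ∧ d ∈ finExp n S := by
    obtain ⟨s, hs, hs0⟩ := h.exists_pos_digit
    exact ⟨s, hs0, hS s hs⟩
  obtain ⟨hd0, hd⟩ := Nat.find_spec hex
  have hmin : ∀ z < Nat.find hex, z ∈ finExp n S → z = 0 := by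
    intro z hz hmem
    by_contra h0
    exact Nat.find_min hex hz ⟨Nat.pos_of_ne_zero h0, hmem⟩
  set d := Nat.find hex
  have hmul : ∀ c t, t ∈ finExp n S ↔ t + c * d ∈ finExp n S := by
    intro c
    induction c with
    | zero => simp
    | succ c ih =>
      intro t
      rw [ih t, htr d hd]
      ring_nf
  have hdvd : ∀ z ∈ finExp n S, d ∣ z := by
    intro z hz
    rw [← Nat.mod_add_div z d, mul_comm, ← hmul] at hz
    exact Nat.dvd_of_mod_eq_zero (hmin _ (Nat.mod_lt _ hd0) hz)
  refine ⟨d, (Finset.eq_of_subset_of_card_le ?_ ?_).symm⟩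
  · intro x hx
    obtain ⟨i, hi, rfl⟩ := Finset.mem_image.1 hx
    rw [Finset.mem_range] at hi
    have h0 : 0 ∈ finExp n S := ⟨0, h.zero_mem_expansions 0⟩
    obtain ⟨J, hJ⟩ : i * d ∈ finExp n S := by simpa using (hmul i 0).1 h0
    obtain ⟨s, hs, w, hw, heq⟩ := mem_expansions_succ.1 (h.expansions_succ_subset J hJ)
    obtain ⟨c, rfl⟩ := hdvd w ⟨J, hw⟩
    have hc : c = 0 := by
      by_contra hc
      have : 1 ≤ c := Nat.one_le_iff_ne_zero.2 hc
      have h1 : n * (d * 1) ≤ n * (d * c) := by gcongr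
      have h2 : i * d < n * d := Nat.mul_lt_mul_of_pos_right hi hd0
      simp only [mul_one] at h1
      omega
    subst hc
    have : s = i * d := by simpa using heq
    exact this ▸ hs
  · rw [Finset.card_image_of_injective _ (fun i j hij => Nat.eq_of_mul_eq_mul_right hd0 hij),
      Finset.card_range, h.card_eq]

theorem exists_notMem_near_zero (h : IsDigitTile n S E M)
    (hAP : ¬ ∃ d : ℕ, S = (Finset.range n).image (fun i => i * d)) {ε : ℝ} (hε : 0 < ε) :
    ∃ x ∈ Ioo 0 ε, x ∉ E := by
  by_contra! hcon
  have hper := h.finExp_periodic (h.finExp_eventually_periodic hε hcon)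
  exact hAP (h.exists_progression fun z hz t => h.finExp_translate hper hz t)

/-! ### Endpoints of gaps -/

/-- The right endpoint `q` of a gap `(p, q)` of `E` has a finite expansion, and near `q` on the
right `E` is a scaled copy of `E` near `0`. Hence the complement of `E` and intervals contained
in `E` both come arbitrarily close to `q` from the right. -/
theorem gap_right_endpoint (h : IsDigitTile n S E M)
    (hAP : ¬ ∃ d : ℕ, S = (Finset.range n).image (fun i => i * d)) {p q : ℝ} (hpq : p < q)
    (hq : q ∈ E) (hgap : ∀ x ∈ Ioo p q, x ∉ E) {ε : ℝ} (hε : 0 < ε) :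
    (∃ y ∈ Ioo q (q + ε), y ∉ E ∧ ∃ v ∈ E, y < v) ∧
    ∃ u v : ℝ, u < v ∧ Ioo u v ⊆ E ∩ Ioo q (q + ε) := by
  obtain ⟨J, hJ⟩ := h.exists_pow_gt (max (M / (q - p)) ((M + 1) / ε))
  have hp := h.powpos J
  have hM := h.M_nonneg
  have hJ1 : M < (n : ℝ) ^ J * (q - p) := by
    have := (le_max_left _ _).trans_lt hJ
    rwa [div_lt_iff₀ (by linarith)] at this
  have hJ2 : (M + 1) / (n : ℝ) ^ J < ε := by
    have := (le_max_right _ _).trans_lt hJ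
    rw [div_lt_iff₀ hε] at this
    rw [div_lt_iff₀ hp]
    linarith
  obtain ⟨z, hz, he⟩ := (h.mem_iff_expansion J q).1 hq
  have hzE := h.expansion_mem hz
  -- `z / n ^ J ∈ E` is at distance less than `q - p` below `q`, so it is `q` itself.
  have hzq : (z : ℝ) = (n : ℝ) ^ J * q := by
    by_contra hne
    have h0 := h.nonneg _ he
    have hlt : (z : ℝ) < (n : ℝ) ^ J * q := lt_of_le_of_ne (by linarith) hne
    refine hgap _ ⟨?_, ?_⟩ hzE
    · rw [lt_div_iff₀ hp]
      linarith [h.le_top _ he]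
    · rw [div_lt_iff₀ hp]
      linarith
  have hinto : ∀ x ∈ E, q + x / (n : ℝ) ^ J ∈ E := by
    intro x hx
    convert h.expansion_add_mem hz hx using 1
    rw [hzq]
    field_simp
  -- The pieces `(w + E) / n ^ J` with `w < z` end before `q`; those with `w > z` start at
  -- `q + 1 / n ^ J` or later.
  have hout : ∀ x ∈ Ioo (0 : ℝ) 1, q + x / (n : ℝ) ^ J ∈ E → x ∈ E := by
    intro x hx hmem
    obtain ⟨w, hw, hwE⟩ := (h.mem_iff_expansion J _).1 hmem
    have heq : (n : ℝ) ^ J * (q + x / (n : ℝ) ^ J) - w = z + x - w := by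
      rw [hzq]
      field_simp
    rw [heq] at hwE
    have h0 := h.nonneg _ hwE
    have hwz : w ≤ z := by
      have : (w : ℝ) < z + 1 := by linarith [hx.2]
      have : w < z + 1 := by exact_mod_cast this
      omega
    rcases hwz.eq_or_lt with rfl | hlt
    · simpa using hwE
    · exfalso
      have hlt' : (w : ℝ) < z := by exact_mod_cast hlt
      refine hgap _ ⟨?_, ?_⟩ (h.expansion_mem hw)
      · rw [lt_div_iff₀ hp]
        linarith [h.le_top _ hwE, hx.1]
      · rw [div_lt_iff₀ hp]
        linarith
  obtain ⟨a, b, hab, hsub⟩ := h.exists_Ioo_subset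
  have hMpos : 0 < M := by
    obtain ⟨x, hx⟩ := exists_between hab
    obtain ⟨y, hy⟩ := exists_between hx.1
    have h1 := h.nonneg _ (hsub ⟨hy.1, hy.2.trans hx.2⟩)
    have h2 := h.le_top _ (hsub hx)
    linarith [hy.2]
  constructor
  · obtain ⟨x, hx, hxE⟩ := h.exists_notMem_near_zero hAP (lt_min one_pos hMpos)
    have hx1 := hx.2.trans_le (min_le_left _ _)
    have hxM := hx.2.trans_le (min_le_right _ _)
    have hlt : x / (n : ℝ) ^ J < (M + 1) / (n : ℝ) ^ J := by
      gcongr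
      linarith
    refine ⟨q + x / (n : ℝ) ^ J, ⟨?_, by linarith⟩, fun hmem => hxE (hout x ⟨hx.1, hx1⟩ hmem),
      q + M / (n : ℝ) ^ J, hinto _ (by simpa using h.symm 0 h.zero), ?_⟩
    · have := div_pos hx.1 hp
      linarith
    · gcongr
  · have ha : 0 ≤ a := by
      by_contra! ha
      obtain ⟨x, hx⟩ := exists_between (lt_min ha hab)
      have := h.nonneg x (hsub ⟨hx.1, hx.2.trans_le (min_le_right _ _)⟩)
      linarith [hx.2.trans_le (min_le_left _ _)]
    refine ⟨q + a / (n : ℝ) ^ J, q + b / (n : ℝ) ^ J, by gcongr, fun y hy => ?_⟩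
    set x := (n : ℝ) ^ J * (y - q) with hx
    have hy' : y = q + x / (n : ℝ) ^ J := by
      rw [hx]
      field_simp
      ring
    have hxab : x ∈ Ioo a b := by
      have h1 := hy.1
      have h2 := hy.2
      rw [hy'] at h1 h2
      exact ⟨(div_lt_div_iff_of_pos_right hp).1 (by linarith),
        (div_lt_div_iff_of_pos_right hp).1 (by linarith)⟩
    have hxE := hsub hxab
    refine ⟨hy' ▸ hinto x hxE, ?_, ?_⟩
    · have := div_pos (ha.trans_lt hxab.1) hp
      linarith
    · have : x / (n : ℝ) ^ J < (M + 1) / (n : ℝ) ^ J := by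
        gcongr
        linarith [h.le_top _ hxE]
      linarith

end IsDigitTile

/-! ### Gaps and components of subsets of the line -/

theorem connectedComponentIn_compl_eq_Ioo {E : Set ℝ} (hE : IsClosed E) {x u v : ℝ}
    (hx : x ∉ E) (hu : u ∈ E) (hv : v ∈ E) (hux : u < x) (hxv : x < v) :
    ∃ p q, p ∈ E ∧ q ∈ E ∧ p < x ∧ x < q ∧ (∀ y ∈ Ioo p q, y ∉ E) ∧
      connectedComponentIn Eᶜ x = Ioo p q := by
  have hne1 : (E ∩ Iic x).Nonempty := ⟨u, hu, hux.le⟩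
  have hbd1 : BddAbove (E ∩ Iic x) := ⟨x, fun y hy => hy.2⟩
  have hne2 : (E ∩ Ici x).Nonempty := ⟨v, hv, hxv.le⟩
  have hbd2 : BddBelow (E ∩ Ici x) := ⟨x, fun y hy => hy.2⟩
  have hp := (hE.inter isClosed_Iic).csSup_mem hne1 hbd1
  have hq := (hE.inter isClosed_Ici).csInf_mem hne2 hbd2
  set p := sSup (E ∩ Iic x)
  set q := sInf (E ∩ Ici x)
  have hpx : p < x := lt_of_le_of_ne hp.2 fun h => hx (h ▸ hp.1)
  have hxq : x < q := lt_of_le_of_ne hq.2 fun h => hx (h ▸ hq.1)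
  have hgap : ∀ y ∈ Ioo p q, y ∉ E := by
    intro y hy hyE
    rcases le_total y x with h | h
    · exact absurd (le_csSup hbd1 ⟨hyE, h⟩) (not_le.2 hy.1)
    · exact absurd (csInf_le hbd2 ⟨hyE, h⟩) (not_le.2 hy.2)
  refine ⟨p, q, hp.1, hq.1, hpx, hxq, hgap, Subset.antisymm ?_ ?_⟩
  · intro y hy
    have hord := (isPreconnected_connectedComponentIn (x := x) (F := Eᶜ)).ordConnected
    have hxm : x ∈ connectedComponentIn Eᶜ x := mem_connectedComponentIn hx
    have hsub := connectedComponentIn_subset Eᶜ x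
    constructor
    · by_contra! hle
      exact hsub (hord.out hy hxm ⟨hle, hpx.le⟩) hp.1
    · by_contra! hle
      exact hsub (hord.out hxm hy ⟨hxq.le, hle⟩) hq.1
  · exact isPreconnected_Ioo.subset_connectedComponentIn ⟨hpx, hxq⟩ hgap

theorem component_mem_gaps {E : Set ℝ} (hE : IsClosed E) {x u v : ℝ}
    (hx : x ∉ E) (hu : u ∈ E) (hv : v ∈ E) (hux : u < x) (hxv : x < v) :
    connectedComponentIn Eᶜ x ∈ gaps E := by
  obtain ⟨p, q, -, -, -, -, -, h⟩ := connectedComponentIn_compl_eq_Ioo hE hx hu hv hux hxv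
  exact ⟨⟨x, hx, rfl⟩, h ▸ Metric.isBounded_Ioo p q⟩

theorem eq_Ioo_of_mem_gaps {E : Set ℝ} (hE : IsClosed E) {G : Set ℝ} (hG : G ∈ gaps E) :
    ∃ p q, p < q ∧ p ∈ E ∧ q ∈ E ∧ (∀ y ∈ Ioo p q, y ∉ E) ∧ G = Ioo p q := by
  obtain ⟨⟨x, hx, rfl⟩, hb⟩ := hG
  have hv : ∃ v ∈ E, x < v := by
    by_contra! H
    have hsub : Ici x ⊆ Eᶜ := fun y hy hyE =>
      hx ((le_antisymm (H y hyE) hy) ▸ hyE)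
    exact not_bddAbove_Ici x
      (hb.subset (isPreconnected_Ici.subset_connectedComponentIn self_mem_Ici hsub)).bddAbove
  have hu : ∃ u ∈ E, u < x := by
    by_contra! H
    have hsub : Iic x ⊆ Eᶜ := fun y hy hyE =>
      hx ((le_antisymm hy (H y hyE)) ▸ hyE)
    exact not_bddBelow_Iic x
      (hb.subset (isPreconnected_Iic.subset_connectedComponentIn self_mem_Iic hsub)).bddBelow
  obtain ⟨v, hv, hxv⟩ := hv
  obtain ⟨u, hu, hux⟩ := hu
  obtain ⟨p, q, hp, hq, hpx, hxq, hgap, h⟩ := connectedComponentIn_compl_eq_Ioo hE hx hu hv hux hxv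
  exact ⟨p, q, hpx.trans hxq, hp, hq, hgap, h⟩

theorem component_mem_intervalComponents {E : Set ℝ} {u v x : ℝ} (hx : x ∈ Ioo u v)
    (hsub : Ioo u v ⊆ E) : connectedComponentIn E x ∈ intervalComponents E := by
  refine ⟨⟨x, hsub hx, rfl⟩, fun hss => ?_⟩
  have hI := isPreconnected_Ioo.subset_connectedComponentIn hx hsub
  obtain ⟨y, hy⟩ := exists_between hx.1
  exact hy.2.ne (hss (hI ⟨hy.1, hy.2.trans hx.2⟩) (hI hx))

/-! ### The two alternatives for a digit tile -/

theorem IsDigitTile.isCantorval {n : ℕ} {S : Finset ℕ} {E : Set ℝ} {M : ℝ}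
    (h : IsDigitTile n S E M)
    (hAP : ¬ ∃ d : ℕ, S = (Finset.range n).image (fun i => i * d)) : IsCantorval E := by
  have hE := h.compact.isClosed
  have hM : M ∈ E := by simpa using h.symm 0 h.zero
  obtain ⟨u, v, huv, hsub⟩ := h.exists_Ioo_subset
  obtain ⟨w, hw⟩ := exists_between huv
  have hMpos : 0 < M := by
    obtain ⟨x, hx⟩ := exists_between hw.1
    have h1 := h.nonneg _ (hsub ⟨hx.1, hx.2.trans hw.2⟩)
    have h2 := h.le_top _ (hsub hw)
    linarith [hx.2]
  refine ⟨⟨0, h.zero⟩, h.compact, ?_, ⟨_, component_mem_intervalComponents hw hsub⟩, ?_⟩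
  · obtain ⟨x, hx, hxE⟩ := h.exists_notMem_near_zero hAP hMpos
    exact ⟨_, component_mem_gaps hE hxE h.zero hM hx.1 hx.2⟩
  intro G hG e he
  obtain ⟨p, q, hpq, hp, hq, hgap, rfl⟩ := eq_Ioo_of_mem_gaps hE hG
  rw [csInf_Ioo hpq, csSup_Ioo hpq] at he
  rcases he with rfl | rfl
  -- The left endpoint is a right endpoint after the reflection `x ↦ M - x`.
  · have hmem (x : ℝ) : M - x ∈ E ↔ x ∈ E :=
      ⟨fun hx => by simpa using h.symm _ hx, h.symm x⟩
    have key := fun (ε : ℝ) (hε : 0 < ε) => h.gap_right_endpoint hAP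
      (p := M - q) (q := M - e) (by linarith) ((hmem e).2 hp)
      (fun x hx hxE => hgap (M - x) ⟨by linarith [hx.2], by linarith [hx.1]⟩ (h.symm _ hxE)) hε
    refine ⟨fun ε hε => ?_, fun ε hε => ?_⟩
    · obtain ⟨⟨y, hy, hyE, v, hv, hyv⟩, -⟩ := key ε hε
      have hyE' : M - y ∉ E := fun H => hyE ((hmem y).1 H)
      refine ⟨_, component_mem_gaps hE hyE' (h.symm v hv) hp (by linarith) (by linarith [hy.1]),
        fun heq => ?_, M - y, mem_connectedComponentIn hyE', ?_⟩
      · have : M - y ∈ Ioo e q := heq ▸ mem_connectedComponentIn hyE'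
        linarith [this.1, hy.1]
      · rw [Real.ball_eq_Ioo]
        constructor <;> linarith [hy.1, hy.2]
    · obtain ⟨-, u, v, huv, hsub⟩ := key ε hε
      obtain ⟨x, hx⟩ := exists_between huv
      have hsub' : Ioo (M - v) (M - u) ⊆ E := fun y hy =>
        (hmem y).1 (hsub ⟨by linarith [hy.2], by linarith [hy.1]⟩).1
      have hx' : M - x ∈ Ioo (M - v) (M - u) := ⟨by linarith [hx.2], by linarith [hx.1]⟩
      have hxq := (hsub hx).2
      refine ⟨_, component_mem_intervalComponents hx' hsub', M - x,
        mem_connectedComponentIn (hsub' hx'), ?_, ?_⟩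
      · rw [Real.ball_eq_Ioo]
        constructor <;> linarith [hxq.1, hxq.2]
      · intro heq
        have : M - x = e := heq
        linarith [hxq.1]
  · have key := fun (ε : ℝ) (hε : 0 < ε) => h.gap_right_endpoint hAP hpq hq hgap hε
    refine ⟨fun ε hε => ?_, fun ε hε => ?_⟩
    · obtain ⟨⟨y, hy, hyE, v, hv, hyv⟩, -⟩ := key ε hε
      refine ⟨_, component_mem_gaps hE hyE hq hv hy.1 hyv,
        fun heq => ?_, y, mem_connectedComponentIn hyE, ?_⟩
      · have : y ∈ Ioo p e := heq ▸ mem_connectedComponentIn hyE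
        linarith [this.2, hy.1]
      · rw [Real.ball_eq_Ioo]
        constructor <;> linarith [hy.1, hy.2]
    · obtain ⟨-, u, v, huv, hsub⟩ := key ε hε
      obtain ⟨x, hx⟩ := exists_between huv
      have hsub' : Ioo u v ⊆ E := fun y hy => (hsub hy).1
      have hxq := (hsub hx).2
      refine ⟨_, component_mem_intervalComponents hx hsub', x,
        mem_connectedComponentIn (hsub' hx), ?_, hxq.1.ne'⟩
      rw [Real.ball_eq_Ioo]
      constructor <;> linarith [hxq.1, hxq.2]

theorem IsDigitTile.eq_Icc {n : ℕ} {S : Finset ℕ} {E : Set ℝ} {M : ℝ}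
    (h : IsDigitTile n S E M) {d : ℕ} (hd : S = (Finset.range n).image (fun i => i * d)) :
    E = Icc 0 M := by
  have hn := h.two_le
  have hnpos := h.npos
  -- Every point of `[0, d]` has a first digit; iterating yields a full expansion.
  have hdig : ∀ x ∈ Icc (0 : ℝ) d, ∃ s ∈ S, (n : ℝ) * x - s ∈ Icc (0 : ℝ) d := by
    intro x hx
    rcases Nat.eq_zero_or_pos d with rfl | hd0
    · refine ⟨0, h.zero_mem, ?_⟩
      have : x = 0 := by simpa using hx
      simp [this]
    have hd0' : (0 : ℝ) < d := by exact_mod_cast hd0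
    rcases hx.2.eq_or_lt with rfl | hlt
    · refine ⟨(n - 1) * d, ?_, ?_⟩
      · rw [hd]
        exact Finset.mem_image.2 ⟨n - 1, Finset.mem_range.2 (by omega), rfl⟩
      · push_cast [Nat.cast_sub (by omega : 1 ≤ n)]
        constructor <;> linarith
    · have hq0 : 0 ≤ (n : ℝ) * x / d := div_nonneg (mul_nonneg hnpos.le hx.1) hd0'.le
      refine ⟨⌊(n : ℝ) * x / d⌋₊ * d, ?_, ?_⟩
      · rw [hd]
        refine Finset.mem_image.2 ⟨_, Finset.mem_range.2 ?_, rfl⟩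
        rw [Nat.floor_lt hq0, div_lt_iff₀ hd0']
        exact mul_lt_mul_of_pos_left hlt hnpos
      · have h1 := Nat.floor_le hq0
        have h2 := Nat.lt_floor_add_one ((n : ℝ) * x / d)
        rw [le_div_iff₀ hd0'] at h1
        rw [div_lt_iff₀ hd0'] at h2
        push_cast
        constructor <;> linarith
  have hsub : Icc (0 : ℝ) d ⊆ E := by
    intro x hx
    refine h.mem_of_approx x d fun J => ?_
    have : ∃ z ∈ expansions n S J, (n : ℝ) ^ J * x - z ∈ Icc (0 : ℝ) d := by
      induction J with
      | zero => exact ⟨0, by simp [expansions], by simpa using hx⟩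
      | succ J ih =>
        obtain ⟨w, hw, hx⟩ := ih
        obtain ⟨s, hs, hx⟩ := hdig _ hx
        refine ⟨s + n * w, mem_expansions_succ.2 ⟨s, hs, w, hw, rfl⟩, ?_⟩
        convert hx using 1
        push_cast
        ring
    obtain ⟨z, hz, hzI⟩ := this
    exact ⟨z, hz, by rw [abs_of_nonneg hzI.1]; exact hzI.2⟩
  have hMd : M ≤ d := by
    have hM : M ∈ E := by simpa using h.symm 0 h.zero
    obtain ⟨s, hs, hsE⟩ := (h.self M).1 hM
    have h1 := h.le_top _ hsE
    rw [hd] at hs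
    obtain ⟨i, hi, rfl⟩ := Finset.mem_image.1 hs
    have hi' : (i : ℝ) + 1 ≤ n := by exact_mod_cast Finset.mem_range.1 hi
    push_cast at h1
    have hn2 : (2 : ℝ) ≤ n := by exact_mod_cast hn
    have hdn : (0 : ℝ) ≤ d := Nat.cast_nonneg d
    nlinarith
  exact Subset.antisymm (fun x hx => ⟨h.nonneg x hx, h.le_top x hx⟩)
    fun x hx => hsub ⟨hx.1, hx.2.trans hMd⟩

/-! ### The achievement set of a multigeometric sequence -/

/-- The subsum of `∑_{j ≥ 1} a j` over the indices `j + 1` with `b j = true`. -/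
noncomputable def subsum (a : ℕ → ℝ) (b : ℕ → Bool) : ℝ :=
  ∑' j : ℕ, if b j then a (j + 1) else 0

theorem summable_subsum {a : ℕ → ℝ} (hpos : ∀ j, 0 ≤ a (j + 1))
    (hsum : Summable fun j => a (j + 1)) (b : ℕ → Bool) :
    Summable fun j : ℕ => if b j then a (j + 1) else 0 := by
  refine Summable.of_nonneg_of_le (fun j => ?_) (fun j => ?_) hsum
  · split_ifs
    exacts [hpos j, le_rfl]
  · split_ifs
    exacts [le_rfl, hpos j]

theorem achievementSet_eq_range {a : ℕ → ℝ} (hpos : ∀ j, 0 ≤ a (j + 1))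
    (hsum : Summable fun j => a (j + 1)) : achievementSet a = range (subsum a) := by
  classical
  have conv : ∀ (A : Set ℕ), A ⊆ {n | 1 ≤ n} → ∀ y,
      (HasSum (fun n : A => a (n : ℕ)) y ↔
        HasSum (fun j : ℕ => if decide (j + 1 ∈ A) then a (j + 1) else 0) y) := by
    intro A hA y
    have h0 : 0 ∉ A := fun h => by simpa using hA h
    have e : (fun n : A => a (n : ℕ)) = a ∘ ((↑) : A → ℕ) := rfl
    rw [e, hasSum_subtype_iff_indicator, ← hasSum_nat_add_iff' 1]
    simp [h0, Set.indicator_apply]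
  ext y
  constructor
  · rintro ⟨A, hA, hy⟩
    exact ⟨fun j => decide (j + 1 ∈ A), ((conv A hA y).1 hy).tsum_eq⟩
  · rintro ⟨b, rfl⟩
    have hA : {N : ℕ | 1 ≤ N ∧ b (N - 1) = true} ⊆ {n | 1 ≤ n} := fun N hN => hN.1
    refine ⟨_, hA, (conv _ hA _).2 ?_⟩
    simpa [subsum] using (summable_subsum hpos hsum b).hasSum

theorem continuous_subsum {a : ℕ → ℝ} (hpos : ∀ j, 0 ≤ a (j + 1))
    (hsum : Summable fun j => a (j + 1)) : Continuous (subsum a) := by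
  refine continuous_tsum (fun j => ?_) hsum (fun j b => ?_)
  · exact (continuous_of_discreteTopology (f := fun c : Bool => if c then a (j + 1) else 0)).comp
      (continuous_apply j)
  · split_ifs
    · rw [Real.norm_of_nonneg (hpos j)]
    · simpa using hpos j

theorem mem_subsetSums_iff (m : ℕ) (k : ℕ → ℕ) (s : ℕ) :
    s ∈ (Finset.Icc 1 m).powerset.image (fun A => ∑ i ∈ A, k i) ↔
      ∃ b : ℕ → Bool, s = ∑ i ∈ Finset.range m, if b i then k (i + 1) else 0 := by
  have hshift (g : ℕ → ℕ) : ∑ i ∈ Finset.Icc 1 m, g i = ∑ i ∈ Finset.range m, g (i + 1) := by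
    rw [Finset.range_eq_Ico, Finset.sum_Ico_add' g 0 m 1]
    rfl
  constructor
  · intro hs
    obtain ⟨A, hA, rfl⟩ := Finset.mem_image.1 hs
    refine ⟨fun i => decide (i + 1 ∈ A), ?_⟩
    simp only [decide_eq_true_eq]
    rw [← hshift fun i => if i ∈ A then k i else 0, Finset.sum_ite_mem,
      Finset.inter_eq_right.2 (Finset.mem_powerset.1 hA)]
  · rintro ⟨b, rfl⟩
    refine Finset.mem_image.2 ⟨(Finset.Icc 1 m).filter fun i => b (i - 1) = true,
      Finset.mem_powerset.2 (Finset.filter_subset _ _), ?_⟩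
    rw [Finset.sum_filter, hshift fun i => if b (i - 1) = true then k i else 0]
    simp

/-- The first `m` terms of a subsum contribute `s / n` with `s ∈ sigmaSet`, and the remaining ones
contribute a subsum divided by `n`; this is the relation `n E = S + E`. -/
theorem isDigitTile_achievementSet (m n : ℕ) (k : ℕ → ℕ)
    (hm : 1 ≤ m) (hn : 2 ≤ n)
    (sigmaSet : Finset ℕ)
    (hsigma : sigmaSet = (Finset.Icc 1 m).powerset.image (fun A => ∑ i ∈ A, k i))
    (hcard : sigmaSet.card = n)
    (hres : sigmaSet.image (· % n) = Finset.range n)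
    (a : ℕ → ℝ)
    (ha : ∀ j i : ℕ, 1 ≤ j → 1 ≤ i → i ≤ m →
      a ((j - 1) * m + i) = (k i : ℝ) * (1 / (n : ℝ)) ^ j) :
    IsDigitTile n sigmaSet (achievementSet a) (∑' j : ℕ, a (j + 1)) := by
  have hn2 : (2 : ℝ) ≤ n := by exact_mod_cast hn
  have hn0 : (0 : ℝ) < n := by linarith
  have hform : ∀ j, a (j + 1) = (k (j % m + 1) : ℝ) * (1 / (n : ℝ)) ^ (j / m + 1) := by
    intro j
    rw [← ha (j / m + 1) (j % m + 1) (Nat.le_add_left _ _) (Nat.le_add_left _ _)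
      (Nat.mod_lt _ hm)]
    congr 1
    have := Nat.div_add_mod j m
    rw [Nat.add_sub_cancel, mul_comm]
    omega
  have hpos : ∀ j, 0 ≤ a (j + 1) := fun j => by rw [hform]; positivity
  have hshift : ∀ j, a (j + m + 1) = a (j + 1) / n := by
    intro j
    rw [hform, hform, Nat.add_mod_right, Nat.add_div_right _ hm,
      pow_succ _ (j / m + 1)]
    ring
  have hfirst : ∀ i < m, a (i + 1) = k (i + 1) / n := by
    intro i hi
    rw [hform, Nat.mod_eq_of_lt hi, Nat.div_eq_of_lt hi]
    ring
  have hsum : Summable fun j => a (j + 1) := by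
    refine summable_of_sum_range_le (c := 2 * ∑ i ∈ Finset.range m, a (i + 1)) hpos fun N => ?_
    have h1 : ∑ i ∈ Finset.range N, a (i + 1) ≤ ∑ i ∈ Finset.range (m + N), a (i + 1) :=
      Finset.sum_le_sum_of_subset_of_nonneg (Finset.range_mono (by omega)) fun i _ _ => hpos i
    rw [Finset.sum_range_add] at h1
    have h2 : ∑ i ∈ Finset.range N, a (m + i + 1) = (∑ i ∈ Finset.range N, a (i + 1)) / n := by
      rw [Finset.sum_div]
      exact Finset.sum_congr rfl fun i _ => by rw [add_comm m i, hshift]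
    have h3 : 0 ≤ ∑ i ∈ Finset.range N, a (i + 1) := Finset.sum_nonneg fun i _ => hpos i
    have h4 : (∑ i ∈ Finset.range N, a (i + 1)) / n ≤ (∑ i ∈ Finset.range N, a (i + 1)) / 2 := by
      gcongr
    linarith
  have hS := summable_subsum hpos hsum
  have hstep : ∀ b : ℕ → Bool, (n : ℝ) * subsum a b =
      ((∑ i ∈ Finset.range m, if b i then k (i + 1) else 0 : ℕ) : ℝ) +
        subsum a fun j => b (j + m) := by
    intro b
    rw [subsum, ← (hS b).sum_add_tsum_nat_add m, mul_add, Finset.mul_sum, subsum, ← tsum_mul_left]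
    push_cast
    congr 1
    · refine Finset.sum_congr rfl fun i hi => ?_
      rw [hfirst i (Finset.mem_range.1 hi)]
      split_ifs
      · field_simp
      · simp
    · refine tsum_congr fun j => ?_
      rw [hshift]
      split_ifs
      · field_simp
      · simp
  have hE := achievementSet_eq_range hpos hsum
  have hinj : ∀ s ∈ sigmaSet, ∀ t ∈ sigmaSet, s % n = t % n → s = t := by
    have : Set.InjOn (· % n) (sigmaSet : Set ℕ) := by
      rw [← Finset.card_image_iff, hres, Finset.card_range, hcard]
    exact fun s hs t ht hst => this hs ht hst
  refine ⟨hn, ?_, hcard, hinj, ?_, ?_, ?_, ?_, ?_, ?_, ?_⟩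
  · rw [hsigma, mem_subsetSums_iff]
    exact ⟨fun _ => false, by simp⟩
  · intro r hr
    have : r ∈ sigmaSet.image (· % n) := by rw [hres]; exact Finset.mem_range.2 hr
    obtain ⟨s, hs, h⟩ := Finset.mem_image.1 this
    exact ⟨s, hs, h⟩
  · rw [hE]
    exact isCompact_range (continuous_subsum hpos hsum)
  · rw [hE]
    rintro _ ⟨b, rfl⟩
    refine tsum_nonneg fun j => ?_
    split_ifs
    exacts [hpos j, le_rfl]
  · rw [hE]
    rintro _ ⟨b, rfl⟩
    refine (hS b).tsum_le_tsum (fun j => ?_) hsum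
    split_ifs
    exacts [le_rfl, hpos j]
  · rw [hE]
    rintro _ ⟨b, rfl⟩
    refine ⟨fun j => !b j, ?_⟩
    rw [eq_sub_iff_add_eq, subsum, subsum, ← (hS _).tsum_add (hS b)]
    refine tsum_congr fun j => ?_
    cases b j <;> simp
  · rw [hE]
    exact ⟨fun _ => false, by simp [subsum]⟩
  · intro x
    rw [hE]
    constructor
    · rintro ⟨b, rfl⟩
      refine ⟨_, ?_, fun j => b (j + m), eq_sub_of_add_eq' (hstep b).symm⟩
      rw [hsigma, mem_subsetSums_iff]
      exact ⟨b, rfl⟩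
    · rintro ⟨s, hs, b, hb⟩
      rw [hsigma, mem_subsetSums_iff] at hs
      obtain ⟨c, rfl⟩ := hs
      refine ⟨fun j => if j < m then c j else b (j - m), ?_⟩
      have h1 := hstep fun j => if j < m then c j else b (j - m)
      have h2 : (fun j => (fun j => if j < m then c j else b (j - m)) (j + m)) = b := by
        funext j
        simp
      rw [h2, hb] at h1
      have h3 : ∑ i ∈ Finset.range m, (if (if i < m then c i else b (i - m)) = true
          then k (i + 1) else 0) = ∑ i ∈ Finset.range m, if c i = true then k (i + 1) else 0 :=
        Finset.sum_congr rfl fun i hi => by rw [if_pos (Finset.mem_range.1 hi)]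
      rw [h3] at h1
      exact mul_left_cancel₀ hn0.ne' (h1.trans (by ring))

/-- (Nitecki) Let `k 1, …, k m` be positive integers, `n ≥ 2`, and suppose the set `Σ`
of subset sums of `{k 1, …, k m}` has `n` elements whose residues mod `n` form the full
set `{0, …, n-1}`. Let `a` be the multigeometric sequence `(k 1, …, k m; 1/n)`, i.e.
`a ((j-1)m + i) = k i · (1/n)^j`. If the increasing enumeration of `Σ` is an arithmetic
progression `σ_i = i·σ_1`, then `E(a)` is the interval `[0, ∑ₙ a n]`; otherwise `E(a)`
is a Cantorval. -/
theorem nitecki_multigeometric (m n : ℕ) (k : ℕ → ℕ)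
    (hm : 1 ≤ m) (hn : 2 ≤ n)
    (hk : ∀ i, 1 ≤ i → i ≤ m → 0 < k i)
    (sigmaSet : Finset ℕ)
    (hsigma : sigmaSet = (Finset.Icc 1 m).powerset.image (fun A => ∑ i ∈ A, k i))
    (hcard : sigmaSet.card = n)
    (hres : sigmaSet.image (· % n) = Finset.range n)
    (a : ℕ → ℝ)
    (ha : ∀ j i : ℕ, 1 ≤ j → 1 ≤ i → i ≤ m →
      a ((j - 1) * m + i) = (k i : ℝ) * (1 / (n : ℝ)) ^ j) :
    ((∃ d : ℕ, sigmaSet = (Finset.range n).image (fun i => i * d)) →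
        achievementSet a = Set.Icc 0 (∑' j : ℕ, a (j + 1))) ∧
    (¬ (∃ d : ℕ, sigmaSet = (Finset.range n).image (fun i => i * d)) →
        IsCantorval (achievementSet a)) := by
  have htile := isDigitTile_achievementSet m n k hm hn sigmaSet hsigma hcard hres a ha
  exact ⟨fun ⟨_, hd⟩ => htile.eq_Icc hd, htile.isCantorval⟩
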